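/- arXiv:1302.5951 — 3 statements merged into one kernel-verified Lean document; each statement's English description precedes it below -/
import Mathlib

section
/- Let E be a finite-dimensional real inner product space, let f : E → ℝ be twice continuously differentiable, let r₀ > 0, define U(x) = exp(−f(x)) and R(x) = r₀ − exp(−f(x)), and let M : E → ℝ be any function. Then at every point x with R(x) > 0, the inequality 2/R(x) + (2·U(x)/R(x)²)·(−Δf(x) + (1 + U(x)/R(x))·‖∇f(x)‖²) < M(x)/R(x)² holds if and only if −ΔR(x) + R(x)⁻¹‖∇R(x)‖² + R(x) < M(x)/2. -/
/-- The flat Laplacian of a function `g` on a finite-dimensional real inner product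
space: the trace of its second derivative, computed as the sum of the second
derivatives along an orthonormal basis. -/
noncomputable def flatLaplacian {E : Type*} [NormedAddCommGroup E] [InnerProductSpace ℝ E]
    [FiniteDimensional ℝ E] (g : E → ℝ) (x : E) : ℝ :=
  ∑ i, fderiv ℝ (fderiv ℝ g) x (stdOrthonormalBasis ℝ E i) (stdOrthonormalBasis ℝ E i)

theorem stmt3 {E : Type*} [NormedAddCommGroup E] [InnerProductSpace ℝ E]
    [FiniteDimensional ℝ E] (f : E → ℝ) (hf : ContDiff ℝ 2 f)
    (r₀ : ℝ) (hr₀ : 0 < r₀)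
    (U R : E → ℝ) (hU : ∀ x, U x = Real.exp (-f x))
    (hR : ∀ x, R x = r₀ - Real.exp (-f x))
    (M : E → ℝ) (x : E) (hRx : 0 < R x) :
    (2 / R x + (2 * U x / (R x) ^ 2) *
        (-flatLaplacian f x + (1 + U x / R x) * ‖gradient f x‖ ^ 2) < M x / (R x) ^ 2) ↔
      (-flatLaplacian R x + (R x)⁻¹ * ‖gradient R x‖ ^ 2 + R x < M x / 2) := by
  have hd : Differentiable ℝ f := hf.differentiable (by norm_num)
  have hE : ∀ y, HasFDerivAt (fun y => Real.exp (-f y)) (-(Real.exp (-f y) • fderiv ℝ f y)) y := by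
    intro y
    have h := ((hd y).hasFDerivAt.neg).exp
    simpa using h
  have hR' : R = fun y => r₀ - Real.exp (-f y) := funext hR
  have h1 : fderiv ℝ R = fun y => Real.exp (-f y) • fderiv ℝ f y := by
    funext y
    rw [hR']
    have h := (hE y).const_sub r₀
    rw [neg_neg] at h
    exact h.fderiv
  have hd2 : DifferentiableAt ℝ (fderiv ℝ f) x :=
    (hf.fderiv_right (m := 1) (by norm_num)).differentiable (by norm_num) x
  have h2 : ∀ v, fderiv ℝ (fderiv ℝ R) x v v
      = U x * fderiv ℝ (fderiv ℝ f) x v v - U x * (fderiv ℝ f x v) ^ 2 := by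
    intro v
    have h3 := ((hE x).smul hd2.hasFDerivAt).fderiv
    have h4 : fderiv ℝ R = (fun y => Real.exp (-f y)) • fderiv ℝ f := h1
    rw [h4, h3, hU]
    simp
    ring
  have hg : gradient R x = U x • gradient f x := by
    simp [gradient, h1, hU]
  have hn : ‖gradient R x‖ ^ 2 = (U x) ^ 2 * ‖gradient f x‖ ^ 2 := by
    rw [hg, norm_smul, mul_pow, Real.norm_eq_abs, sq_abs]
  have hs : ∑ i, (fderiv ℝ f x (stdOrthonormalBasis ℝ E i)) ^ 2 = ‖gradient f x‖ ^ 2 := by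
    rw [← (stdOrthonormalBasis ℝ E).sum_sq_norm_inner_left (gradient f x)]
    refine Finset.sum_congr rfl fun i _ => ?_
    rw [gradient, InnerProductSpace.toDual_symm_apply, Real.norm_eq_abs, sq_abs]
  have hL : flatLaplacian R x = U x * flatLaplacian f x - U x * ‖gradient f x‖ ^ 2 := by
    unfold flatLaplacian
    simp only [h2]
    rw [Finset.sum_sub_distrib, ← Finset.mul_sum, ← Finset.mul_sum, hs]
  rw [hL, hn]
  have e : 2 / R x + (2 * U x / (R x) ^ 2) *
        (-flatLaplacian f x + (1 + U x / R x) * ‖gradient f x‖ ^ 2)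
      = (2 * (-(U x * flatLaplacian f x - U x * ‖gradient f x‖ ^ 2)
        + (R x)⁻¹ * ((U x) ^ 2 * ‖gradient f x‖ ^ 2) + R x)) / (R x) ^ 2 := by
    field_simp
    ring
  rw [e, div_lt_div_iff_of_pos_right (by positivity), lt_div_iff₀ (by norm_num), mul_comm (2 : ℝ)]
end

section
/- Let φ : ℝ² → ℝ be a smooth (infinitely differentiable) function with compact support on the Euclidean plane, and let p ∈ ℝ². Then the function x ↦ log‖x − p‖ · Δφ(x) is integrable with respect to Lebesgue measure and ∫_{ℝ²} log‖x − p‖ · Δφ(x) dx = 2π·φ(p). -/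
open MeasureTheory

open Filter Topology Set

abbrev E2 := EuclideanSpace ℝ (Fin 2)

lemma kernel_int : ∫ x : E2, (Real.pi * (1 + ‖x‖ ^ 2) ^ 2)⁻¹ = 1 := by
  have h := integral_fun_norm_addHaar (volume : Measure E2)
    (fun r : ℝ => (Real.pi * (1 + r ^ 2) ^ 2)⁻¹)
  rw [h]
  have h2 : ∫ y in Ioi (0 : ℝ), y ^ (Module.finrank ℝ E2 - 1) • (Real.pi * (1 + y ^ 2) ^ 2)⁻¹
      = 0 - (-(2 * Real.pi)⁻¹ * (1 + (0 : ℝ) ^ 2)⁻¹) := by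
    refine integral_Ioi_of_hasDerivAt_of_nonneg' (g := fun r : ℝ => -(2 * Real.pi)⁻¹ * (1 + r ^ 2)⁻¹)
      ?_ ?_ ?_
    · intro x _
      have hx : (1 + x ^ 2) ≠ 0 := by positivity
      have h1 : HasDerivAt (fun r : ℝ => 1 + r ^ 2) (2 * x) x := by
        simpa using (hasDerivAt_pow 2 x).const_add 1
      have := Real.pi_ne_zero
      refine ((h1.inv hx).const_mul (-(2 * Real.pi)⁻¹)).congr_deriv ?_
      rw [finrank_euclideanSpace, Fintype.card_fin, smul_eq_mul]
      field_simp
      simp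
    · intro x hx
      have : (0 : ℝ) < x := hx
      positivity
    · have : Tendsto (fun r : ℝ => (1 + r ^ 2)) atTop atTop :=
        tendsto_atTop_add_const_left _ _ (tendsto_pow_atTop two_ne_zero)
      simpa using (tendsto_inv_atTop_zero.comp this).const_mul (-(2 * Real.pi)⁻¹)
  rw [h2]
  have := Real.pi_pos
  simp [Measure.real, this.le]

lemma kernel_decay : Tendsto (fun x : E2 => ‖x‖ ^ Module.finrank ℝ E2 *
    (Real.pi * (1 + ‖x‖ ^ 2) ^ 2)⁻¹) (Bornology.cobounded E2) (𝓝 0) := by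
  have h0 : Tendsto (fun x : E2 => (1 + ‖x‖ ^ 2)) (Bornology.cobounded E2) atTop :=
    tendsto_atTop_add_const_left _ _
      ((tendsto_pow_atTop two_ne_zero).comp tendsto_norm_cobounded_atTop)
  have h1 := (tendsto_inv_atTop_zero.comp h0).const_mul (Real.pi)⁻¹
  rw [mul_zero] at h1
  refine squeeze_zero (fun x => by positivity) (fun x => ?_) h1
  have := Real.pi_pos
  simp only [finrank_euclideanSpace, Fintype.card_fin, Function.comp]
  rw [mul_inv, mul_left_comm]
  gcongr
  rw [← div_eq_mul_inv, div_le_iff₀ (by positivity), inv_mul_eq_div, pow_two (1 + ‖x‖ ^ 2),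
    mul_div_assoc, div_self (by positivity)]
  linarith

lemma fderiv_log (p v : E2) {ε : ℝ} (hε : 0 < ε) (x : E2) :
    fderiv ℝ (fun x : E2 => 1 / 2 * Real.log (‖x - p‖ ^ 2 + ε ^ 2)) x v
      = inner ℝ (x - p) v * (‖x - p‖ ^ 2 + ε ^ 2)⁻¹ := by
  have hs : (‖x - p‖ ^ 2 + ε ^ 2) ≠ 0 := by positivity
  have h1 : HasFDerivAt (fun x : E2 => ‖x - p‖ ^ 2 + ε ^ 2) _ x :=
    ((hasFDerivAt_id x).sub_const p).norm_sq.add_const (ε ^ 2)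
  rw [((h1.log hs).const_mul (1 / 2)).fderiv]
  simp [inner_sub_left (𝕜 := ℝ) x p v]
  ring

lemma fderiv_two (p v : E2) {ε : ℝ} (hε : 0 < ε) (x : E2) :
    fderiv ℝ (fun x : E2 => inner ℝ (x - p) v * (‖x - p‖ ^ 2 + ε ^ 2)⁻¹) x v
      = ‖v‖ ^ 2 * (‖x - p‖ ^ 2 + ε ^ 2)⁻¹
        - 2 * inner ℝ (x - p) v ^ 2 * ((‖x - p‖ ^ 2 + ε ^ 2) ^ 2)⁻¹ := by
  have hs : (‖x - p‖ ^ 2 + ε ^ 2) ≠ 0 := by positivity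
  have h1 : HasFDerivAt (fun x : E2 => ‖x - p‖ ^ 2 + ε ^ 2) _ x :=
    ((hasFDerivAt_id x).sub_const p).norm_sq.add_const (ε ^ 2)
  have h2 : HasFDerivAt (fun x : E2 => inner ℝ (x - p) v) _ x :=
    ((hasFDerivAt_id x).sub_const p).inner ℝ (hasFDerivAt_const v x)
  have h3 : HasFDerivAt (fun x : E2 => (‖x - p‖ ^ 2 + ε ^ 2)⁻¹) _ x :=
    (hasDerivAt_inv hs).comp_hasFDerivAt x h1
  have h4 : HasFDerivAt (fun x : E2 => inner ℝ (x - p) v * (‖x - p‖ ^ 2 + ε ^ 2)⁻¹) _ x :=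
    h2.mul h3
  rw [h4.fderiv]
  simp [inner_sub_left (𝕜 := ℝ) x p v]
  ring

lemma ibp (φ : E2 → ℝ) (hφ : ContDiff ℝ (⊤ : ℕ∞) φ)
    (hsupp : HasCompactSupport φ) (p v : E2) {ε : ℝ} (hε : 0 < ε) :
    ∫ x : E2, 1 / 2 * Real.log (‖x - p‖ ^ 2 + ε ^ 2) * fderiv ℝ (fderiv ℝ φ) x v v
      = ∫ x : E2, (‖v‖ ^ 2 * (‖x - p‖ ^ 2 + ε ^ 2)⁻¹
        - 2 * inner ℝ (x - p) v ^ 2 * ((‖x - p‖ ^ 2 + ε ^ 2) ^ 2)⁻¹) * φ x := by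
  have hs : ∀ x : E2, (‖x - p‖ ^ 2 + ε ^ 2) ≠ 0 := fun x => by positivity
  have hs2 : ∀ x : E2, (‖x - p‖ ^ 2 + ε ^ 2) ^ 2 ≠ 0 := fun x => by positivity
  have hφ1 : ContDiff ℝ (⊤ : ℕ∞) (fderiv ℝ φ) := hφ.fderiv_right (by simp)
  have hφ2 : ContDiff ℝ (⊤ : ℕ∞) (fderiv ℝ (fderiv ℝ φ)) := hφ1.fderiv_right (by simp)
  have hψ : ContDiff ℝ (⊤ : ℕ∞) (fun x => fderiv ℝ φ x v) := hφ1.clm_apply contDiff_const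
  have e : ∀ x, fderiv ℝ (fun x => fderiv ℝ φ x v) x v = fderiv ℝ (fderiv ℝ φ) x v v := by
    intro x
    rw [fderiv_clm_apply (hφ1.differentiable (by simp) x) (by fun_prop)]
    simp
  have c0 : Continuous (fun x : E2 => 1 / 2 * Real.log (‖x - p‖ ^ 2 + ε ^ 2)) := by
    fun_prop (disch := exact hs)
  have c1 : Continuous (fun x : E2 => inner ℝ (x - p) v * (‖x - p‖ ^ 2 + ε ^ 2)⁻¹) := by
    fun_prop (disch := exact hs)
  have c2 : Continuous (fun x : E2 => (‖v‖ ^ 2 * (‖x - p‖ ^ 2 + ε ^ 2)⁻¹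
        - 2 * inner ℝ (x - p) v ^ 2 * ((‖x - p‖ ^ 2 + ε ^ 2) ^ 2)⁻¹)) := by
    fun_prop (disch := first | exact hs | exact hs2)
  have k1 : HasCompactSupport (fun x => fderiv ℝ φ x v) := hsupp.fderiv_apply ℝ v
  have k2 : HasCompactSupport (fun x => fderiv ℝ (fderiv ℝ φ) x v v) := by
    have := k1.fderiv_apply ℝ v
    simpa only [e] using this
  have d2 : Continuous (fun x => fderiv ℝ (fderiv ℝ φ) x v v) := by
    have := hφ2.continuous
    fun_prop
  have int : ∀ {f g : E2 → ℝ}, Continuous f → Continuous g → HasCompactSupport g →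
      Integrable (fun x => f x * g x) := fun hf hg hk =>
    (hf.mul hg).integrable_of_hasCompactSupport hk.mul_left
  have n2 : ∀ x : E2, DifferentiableAt ℝ (fun x : E2 => ‖x - p‖ ^ 2 + ε ^ 2) x := fun x =>
    (((hasFDerivAt_id x).sub_const p).norm_sq.add_const (ε ^ 2)).differentiableAt
  have i1 := integral_mul_fderiv_eq_neg_fderiv_mul_of_integrable (μ := (volume : Measure E2))
    (f := fun x : E2 => 1 / 2 * Real.log (‖x - p‖ ^ 2 + ε ^ 2))
    (g := fun x => fderiv ℝ φ x v) (v := v)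
    (by simp only [fderiv_log p v hε]; exact int c1 hψ.continuous k1)
    (by simp only [e]; exact int c0 d2 k2) (int c0 hψ.continuous k1)
    (fun x _ => ((n2 x).log (hs x)).const_mul _)
    (fun x _ => hψ.differentiable (by simp) x)
  have i2 := integral_mul_fderiv_eq_neg_fderiv_mul_of_integrable (μ := (volume : Measure E2))
    (f := fun x : E2 => inner ℝ (x - p) v * (‖x - p‖ ^ 2 + ε ^ 2)⁻¹)
    (g := φ) (v := v)
    (by simp only [fderiv_two p v hε]; exact int c2 hφ.continuous hsupp)
    (int c1 hψ.continuous k1) (int c1 hφ.continuous hsupp)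
    (fun x _ => DifferentiableAt.mul (((differentiableAt_id (x := x)).sub_const p).inner ℝ
      (differentiableAt_const v)) ((n2 x).inv (hs x)))
    (fun x _ => hφ.differentiable (by simp) x)
  simp only [fderiv_log p v hε, e] at i1
  simp only [fderiv_two p v hε] at i2
  rw [i1, i2, neg_neg]

lemma lap_cont (φ : E2 → ℝ) (hφ : ContDiff ℝ (⊤ : ℕ∞) φ) : Continuous (flatLaplacian φ) := by
  have hφ1 : ContDiff ℝ (⊤ : ℕ∞) (fderiv ℝ φ) := hφ.fderiv_right (by simp)
  have hφ2 : ContDiff ℝ (⊤ : ℕ∞) (fderiv ℝ (fderiv ℝ φ)) := hφ1.fderiv_right (by simp)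
  have := hφ2.continuous
  unfold flatLaplacian
  fun_prop

lemma lap_supp (φ : E2 → ℝ) (hsupp : HasCompactSupport φ) :
    HasCompactSupport (flatLaplacian φ) := by
  refine ((hsupp.fderiv ℝ).fderiv ℝ).mono fun x hx => ?_
  contrapose! hx
  simp only [Function.mem_support, not_not] at hx ⊢
  simp [flatLaplacian, hx]

lemma ibp_lap (φ : E2 → ℝ) (hφ : ContDiff ℝ (⊤ : ℕ∞) φ)
    (hsupp : HasCompactSupport φ) (p : E2) {ε : ℝ} (hε : 0 < ε) :
    ∫ x : E2, 1 / 2 * Real.log (‖x - p‖ ^ 2 + ε ^ 2) * flatLaplacian φ x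
      = ∫ x : E2, 2 * ε ^ 2 * ((‖x - p‖ ^ 2 + ε ^ 2) ^ 2)⁻¹ * φ x := by
  have hs : ∀ x : E2, (‖x - p‖ ^ 2 + ε ^ 2) ≠ 0 := fun x => by positivity
  have hs2 : ∀ x : E2, (‖x - p‖ ^ 2 + ε ^ 2) ^ 2 ≠ 0 := fun x => by positivity
  have hφ1 : ContDiff ℝ (⊤ : ℕ∞) (fderiv ℝ φ) := hφ.fderiv_right (by simp)
  have hφ2 : ContDiff ℝ (⊤ : ℕ∞) (fderiv ℝ (fderiv ℝ φ)) := hφ1.fderiv_right (by simp)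
  have hc := hφ2.continuous
  have c0 : Continuous (fun x : E2 => 1 / 2 * Real.log (‖x - p‖ ^ 2 + ε ^ 2)) := by
    fun_prop (disch := exact hs)
  simp only [flatLaplacian, Finset.mul_sum]
  rw [integral_finsetSum]
  · simp only [ibp φ hφ hsupp p _ hε]
    rw [← integral_finsetSum]
    · congr 1
      ext x
      rw [← Finset.sum_mul, Finset.sum_sub_distrib, ← Finset.sum_mul, ← Finset.sum_mul,
        ← Finset.mul_sum, OrthonormalBasis.sum_sq_inner_left]
      simp
      left
      have := hs x
      field_simp
      ring
    · intro i _
      refine Continuous.integrable_of_hasCompactSupport ?_ hsupp.mul_left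
      have := hφ.continuous
      fun_prop (disch := first | exact hs | exact hs2)
  · intro i _
    refine Continuous.integrable_of_hasCompactSupport (by fun_prop) (HasCompactSupport.mul_left ?_)
    refine ((hsupp.fderiv ℝ).fderiv ℝ).mono fun x hx => ?_
    contrapose! hx
    simp only [Function.mem_support, not_not] at hx ⊢
    simp [hx]

lemma log_loc (p : E2) : LocallyIntegrable (fun x : E2 => Real.log ‖x - p‖) := by
  have h0 : ∀ R : ℝ, IntegrableOn (fun x : E2 => Real.log ‖x‖) (Metric.ball 0 R) := by
    intro R
    rw [integrableOn_fun_norm_addHaar]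
    refine IntegrableOn.mono_set (t := Icc 0 R) ?_ Ioo_subset_Icc_self
    simpa using Real.continuous_mul_log.continuousOn.integrableOn_compact isCompact_Icc
  have h1 : LocallyIntegrable (fun x : E2 => Real.log ‖x‖) := by
    intro x
    refine ⟨Metric.ball 0 (‖x‖ + 1), Metric.isOpen_ball.mem_nhds (by simp), h0 _⟩
  have h2 : ∀ R : ℝ, IntegrableOn (fun x : E2 => Real.log ‖x - p‖) (Metric.ball p R) := by
    intro R
    have := (measurePreserving_sub_right (volume : Measure E2) p).integrableOn_comp_preimage
      (MeasurableEquiv.subRight p).measurableEmbedding (f := fun x : E2 => Real.log ‖x‖)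
      (s := Metric.ball 0 R)
    have h3 := this.2 (h0 R)
    have hb : Metric.ball p R = (fun x => x - p) ⁻¹' Metric.ball 0 R := by
      ext x
      simp [dist_eq_norm]
    rw [hb]
    exact h3
  intro x
  exact ⟨Metric.ball p (dist x p + 1), Metric.isOpen_ball.mem_nhds (by simp), h2 _⟩

theorem stmt6 (φ : EuclideanSpace ℝ (Fin 2) → ℝ) (hφ : ContDiff ℝ (⊤ : ℕ∞) φ)
    (hsupp : HasCompactSupport φ) (p : EuclideanSpace ℝ (Fin 2)) :
    Integrable (fun x : EuclideanSpace ℝ (Fin 2) => Real.log ‖x - p‖ * flatLaplacian φ x) ∧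
    ∫ x : EuclideanSpace ℝ (Fin 2), Real.log ‖x - p‖ * flatLaplacian φ x
      = 2 * Real.pi * φ p := by
  have hL := lap_cont φ hφ
  have hLs := lap_supp φ hsupp
  have hint : Integrable (fun x : E2 => Real.log ‖x - p‖ * flatLaplacian φ x) := by
    simpa [mul_comm] using (log_loc p).integrable_smul_left_of_hasCompactSupport hL hLs
  refine ⟨hint, ?_⟩
  have T1 := tendsto_integral_comp_smul_smul_of_integrable' (μ := (volume : Measure E2))
    (fun x => by positivity) kernel_int kernel_decay (x₀ := p)
    (hφ.continuous.integrable_of_hasCompactSupport hsupp) hφ.continuous.continuousAt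
  have T2 := T1.const_mul (2 * Real.pi)
  have T3 : Tendsto (fun c : ℝ => ∫ x : E2,
      1 / 2 * Real.log (‖x - p‖ ^ 2 + c⁻¹ ^ 2) * flatLaplacian φ x) atTop
      (𝓝 (2 * Real.pi * φ p)) := by
    refine T2.congr' ?_
    filter_upwards [eventually_gt_atTop 0] with c hc
    rw [ibp_lap φ hφ hsupp p (inv_pos.2 hc), ← integral_const_mul]
    congr 1
    ext x
    have := Real.pi_pos
    have h1 : ‖c • (p - x)‖ ^ 2 = c ^ 2 * ‖x - p‖ ^ 2 := by
      rw [norm_smul, mul_pow, norm_sub_rev]; simp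
    rw [h1]
    simp only [finrank_euclideanSpace, Fintype.card_fin, smul_eq_mul]
    field_simp
    ring
  refine tendsto_nhds_unique ?_ T3
  have hne : ∀ᵐ x : E2, x ≠ p := by
    simp [ae_iff]
  refine tendsto_integral_filter_of_dominated_convergence
    (fun x => ‖Real.log ‖x - p‖ * flatLaplacian φ x‖ + ‖‖x - p‖ ^ 2 * flatLaplacian φ x‖)
    ?_ ?_ ?_ ?_
  · filter_upwards [eventually_gt_atTop 0] with c hc
    have hs : ∀ x : E2, (‖x - p‖ ^ 2 + c⁻¹ ^ 2) ≠ 0 := fun x => by positivity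
    refine Continuous.aestronglyMeasurable ?_
    fun_prop (disch := exact hs)
  · filter_upwards [eventually_ge_atTop 1] with c hc
    filter_upwards [hne] with x hx
    have hx' : 0 < ‖x - p‖ := norm_pos_iff.2 (sub_ne_zero.2 hx)
    rw [norm_mul, norm_mul (Real.log ‖x - p‖), norm_mul (‖x - p‖ ^ 2), ← add_mul]
    gcongr
    have hc0 : 0 < c⁻¹ := by positivity
    have hc1 : c⁻¹ ^ 2 ≤ 1 := pow_le_one₀ hc0.le (inv_le_one_of_one_le₀ hc)
    have a1 : Real.log (‖x - p‖ ^ 2 + c⁻¹ ^ 2) ≤ ‖x - p‖ ^ 2 :=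
      (Real.log_le_sub_one_of_pos (by positivity)).trans (by linarith)
    have a2 : 2 * Real.log ‖x - p‖ ≤ Real.log (‖x - p‖ ^ 2 + c⁻¹ ^ 2) := by
      have := Real.log_le_log (by positivity : 0 < ‖x - p‖ ^ 2)
        (by nlinarith : ‖x - p‖ ^ 2 ≤ ‖x - p‖ ^ 2 + c⁻¹ ^ 2)
      rwa [Real.log_pow] at this
    have a3 : (0 : ℝ) ≤ ‖x - p‖ ^ 2 := by positivity
    have a4 := neg_abs_le (Real.log ‖x - p‖)
    have a5 := abs_nonneg (Real.log ‖x - p‖)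
    rw [Real.norm_eq_abs, Real.norm_eq_abs, Real.norm_eq_abs, abs_of_nonneg a3, abs_le]
    constructor <;> linarith
  · refine hint.norm.add (Integrable.norm ?_)
    exact Continuous.integrable_of_hasCompactSupport (by fun_prop) hLs.mul_left
  · filter_upwards [hne] with x hx
    have hx' : 0 < ‖x - p‖ := norm_pos_iff.2 (sub_ne_zero.2 hx)
    refine Tendsto.mul_const _ ?_
    have h1 : Tendsto (fun c : ℝ => ‖x - p‖ ^ 2 + c⁻¹ ^ 2) atTop (𝓝 (‖x - p‖ ^ 2)) := by
      simpa using (tendsto_inv_atTop_zero.pow 2).const_add (‖x - p‖ ^ 2)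
    have h2 := (h1.log (by positivity)).const_mul (1 / 2)
    convert h2 using 2
    rw [Real.log_pow]
    push_cast
    ring
end

section
/- Let r₀ > 0, 0 < u_* < r₀, δ > 0, δ₀ ≥ 0, H ≥ 0. Let r, h, k : [0, u_*] → ℝ with r and h differentiable, and suppose that for all u ∈ [0, u_*]: (i) 0 < r(u) ≤ r₀ and |r'(u) + 1| ≤ δ₀·r(u); (ii) 0 ≤ h(u) ≤ H·δ⁻¹; (iii) |k(u) + 2/r(u)| ≤ δ₀; and (iv) |h'(u) + k(u)·h(u)| ≤ δ₀·δ⁻¹. Then for every u ∈ [0, u_*], |r(u)²·h(u) − r(0)²·h(0)| ≤ (3H + 1)·r₀²·δ₀·δ⁻¹·u. -/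
theorem stmt10 (r₀ uStar δ δ₀ H : ℝ) (hr₀ : 0 < r₀) (huStar : 0 < uStar) (huStar' : uStar < r₀)
    (hδ : 0 < δ) (hδ₀ : 0 ≤ δ₀) (hH : 0 ≤ H)
    (r h k r' h' : ℝ → ℝ)
    (hrderiv : ∀ u ∈ Set.Icc (0 : ℝ) uStar, HasDerivWithinAt r (r' u) (Set.Icc 0 uStar) u)
    (hhderiv : ∀ u ∈ Set.Icc (0 : ℝ) uStar, HasDerivWithinAt h (h' u) (Set.Icc 0 uStar) u)
    (h1 : ∀ u ∈ Set.Icc (0 : ℝ) uStar, 0 < r u ∧ r u ≤ r₀ ∧ |r' u + 1| ≤ δ₀ * r u)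
    (h2 : ∀ u ∈ Set.Icc (0 : ℝ) uStar, 0 ≤ h u ∧ h u ≤ H * δ⁻¹)
    (h3 : ∀ u ∈ Set.Icc (0 : ℝ) uStar, |k u + 2 / r u| ≤ δ₀)
    (h4 : ∀ u ∈ Set.Icc (0 : ℝ) uStar, |h' u + k u * h u| ≤ δ₀ * δ⁻¹) :
    ∀ u ∈ Set.Icc (0 : ℝ) uStar,
      |r u ^ 2 * h u - r 0 ^ 2 * h 0| ≤ (3 * H + 1) * r₀ ^ 2 * δ₀ * δ⁻¹ * u := by
  have key := norm_image_sub_le_of_norm_deriv_le_segment'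
    (f := fun u => r u ^ 2 * h u)
    (f' := fun u => 2 * r u * r' u * h u + r u ^ 2 * h' u)
    (a := 0) (b := uStar) (C := (3 * H + 1) * r₀ ^ 2 * δ₀ * δ⁻¹) ?_ ?_
  · intro u hu
    have := key u hu
    simpa [Real.norm_eq_abs] using this
  · intro u hu
    have := ((hrderiv u hu).pow 2).mul (hhderiv u hu)
    refine this.congr_deriv ?_
    simp
  · intro u hu'
    have hu := Set.Ico_subset_Icc_self hu'
    obtain ⟨hr, hrr, hr1⟩ := h1 u hu
    obtain ⟨hh, hhH⟩ := h2 u hu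
    have e : 2 * r u * r' u * h u + r u ^ 2 * h' u
        = 2 * r u * h u * (r' u + 1) + r u ^ 2 * (h' u + k u * h u)
          - r u ^ 2 * h u * (k u + 2 / r u) := by
      field_simp
      ring
    have hd : 0 < δ⁻¹ := inv_pos.2 hδ
    have b1 : |2 * r u * h u * (r' u + 1)| ≤ 2 * r u * h u * (δ₀ * r u) := by
      rw [abs_mul, abs_of_nonneg (by positivity : 0 ≤ 2 * r u * h u)]
      gcongr
    have b2 : |r u ^ 2 * (h' u + k u * h u)| ≤ r u ^ 2 * (δ₀ * δ⁻¹) := by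
      rw [abs_mul, abs_of_nonneg (by positivity : 0 ≤ r u ^ 2)]
      gcongr
      exact h4 u hu
    have b3 : |r u ^ 2 * h u * (k u + 2 / r u)| ≤ r u ^ 2 * h u * δ₀ := by
      rw [abs_mul, abs_of_nonneg (by positivity : 0 ≤ r u ^ 2 * h u)]
      gcongr
      exact h3 u hu
    rw [Real.norm_eq_abs, e]
    calc _ ≤ |2 * r u * h u * (r' u + 1)| + |r u ^ 2 * (h' u + k u * h u)|
          + |r u ^ 2 * h u * (k u + 2 / r u)| :=
            (abs_sub _ _).trans (add_le_add_left (abs_add_le _ _) _)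
      _ ≤ r u ^ 2 * δ₀ * (3 * h u + δ⁻¹) := by linarith
      _ ≤ r₀ ^ 2 * δ₀ * (3 * (H * δ⁻¹) + δ⁻¹) := by gcongr
      _ = _ := by ring
end
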